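/- For n ≥ 2, the real polynomial equation p^(n+1) + 2p^n − p^(n−1) − n(p−1)² = 0 has a root p_1 in the interval (0,1), and as n → ∞ this smallest positive root satisfies p_1 = 1 − (ln n)/n + o((ln n)/n). -/

import Mathlib

open Real Filter Asymptotics

/-!
Write the equation as `q ^ (n - 1) * (q ^ 2 + 2 * q - 1) = n * (1 - q) ^ 2` and put
`L = log n / n`. At `q = 1 - a * L` the power `q ^ n` is `n ^ (-a + o(1))`, whereas
`n * (1 - q) ^ 2 = a ^ 2 * log n ^ 2 / n`. For `a < 1` the left side wins, so the polynomial, which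
is negative at `0`, has a root below `1 - a * L`. Already at `a = 1` the squared logarithm makes the
right side win, and this persists for all smaller `q`, so every positive root exceeds `1 - L`.
-/

/-- The polynomial `q ^ (n + 1) + 2 * q ^ n - q ^ (n - 1) - n * (q - 1) ^ 2` of the characteristic
equation, as a function of the real variable `q`. The exponent `n - 1` is truncated, so `n = 0` is
degenerate. -/
def transferPoly (n : ℕ) (q : ℝ) : ℝ :=
  q ^ (n + 1) + 2 * q ^ n - q ^ (n - 1) - n * (q - 1) ^ 2

/-- The set of positive real roots of `transferPoly n`; the root `p₁` of the theorem is its least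
element. -/
def positiveRoots (n : ℕ) : Set ℝ := {q | 0 < q ∧ transferPoly n q = 0}

section Roots

variable {n : ℕ} {p q r : ℝ}

lemma continuous_transferPoly (n : ℕ) : Continuous (transferPoly n) := by
  unfold transferPoly
  fun_prop

lemma transferPoly_eq_pow_mul_sub (hn : n ≠ 0) (q : ℝ) :
    transferPoly n q = q ^ (n - 1) * (q ^ 2 + 2 * q - 1) - n * (1 - q) ^ 2 := by
  obtain ⟨m, rfl⟩ := Nat.exists_eq_succ_of_ne_zero hn
  simp only [transferPoly, Nat.succ_eq_add_one, Nat.add_sub_cancel]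
  ring

lemma transferPoly_zero_neg (hn : n ≠ 0) : transferPoly n 0 < 0 := by
  have hn_pos : (0 : ℝ) < n := by positivity
  have hpow : (0 : ℝ) ≤ 0 ^ (n - 1) := by positivity
  rw [transferPoly_eq_pow_mul_sub hn]
  linarith

lemma transferPoly_one_pos (n : ℕ) : 0 < transferPoly n 1 := by
  norm_num [transferPoly]

lemma transferPoly_pos_of_lt_pow (hn : n ≠ 0) (hr : 2 / 3 ≤ r) (h : n * (1 - r) ^ 2 < r ^ n) :
    0 < transferPoly n r := by
  have hfactor : r ≤ r ^ 2 + 2 * r - 1 := by nlinarith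
  have hpow : r ^ n ≤ r ^ (n - 1) * (r ^ 2 + 2 * r - 1) := by
    rw [← pow_sub_one_mul hn r]
    gcongr
  rw [transferPoly_eq_pow_mul_sub hn]
  linarith

lemma transferPoly_neg_of_le (hn : n ≠ 0) (hq : 0 ≤ q) (hqr : q ≤ r) (hr : r ≤ 1)
    (h : 2 * r ^ (n - 1) < n * (1 - r) ^ 2) : transferPoly n q < 0 := by
  have hfactor : q ^ 2 + 2 * q - 1 ≤ 2 := by nlinarith
  rw [transferPoly_eq_pow_mul_sub hn, sub_neg]
  calc q ^ (n - 1) * (q ^ 2 + 2 * q - 1) ≤ q ^ (n - 1) * 2 := by gcongr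
    _ ≤ r ^ (n - 1) * 2 := by gcongr
    _ = 2 * r ^ (n - 1) := mul_comm _ _
    _ < n * (1 - r) ^ 2 := h
    _ ≤ n * (1 - q) ^ 2 := by gcongr

lemma exists_mem_positiveRoots_lt (hn : n ≠ 0) (hr : 0 ≤ r) (h : 0 < transferPoly n r) :
    ∃ q ∈ positiveRoots n, q < r := by
  obtain ⟨q, hq, hroot⟩ := intermediate_value_Ioo hr (continuous_transferPoly n).continuousOn
    ⟨transferPoly_zero_neg hn, h⟩
  exact ⟨q, ⟨hq.1, hroot⟩, hq.2⟩

lemma exists_isLeast_positiveRoots (hn : n ≠ 0) : ∃ p, IsLeast (positiveRoots n) p := by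
  have hroots : positiveRoots n = Set.Ici 0 ∩ transferPoly n ⁻¹' {0} := by
    ext q
    refine ⟨fun hq => ⟨hq.1.le, hq.2⟩, fun ⟨hq, hroot⟩ => ⟨lt_of_le_of_ne hq ?_, hroot⟩⟩
    rintro rfl
    exact (transferPoly_zero_neg hn).ne hroot
  have hclosed : IsClosed (positiveRoots n) :=
    hroots ▸ isClosed_Ici.inter (isClosed_singleton.preimage (continuous_transferPoly n))
  obtain ⟨q, hq, -⟩ := exists_mem_positiveRoots_lt hn zero_le_one (transferPoly_one_pos n)
  exact ⟨_, hclosed.isLeast_csInf ⟨q, hq⟩ ⟨0, fun q hq => hq.1.le⟩⟩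

lemma isLeast_positiveRoots_lt (hn : n ≠ 0) (hp : IsLeast (positiveRoots n) p) (hr : 0 ≤ r)
    (h : 0 < transferPoly n r) : p < r := by
  obtain ⟨q, hq, hqr⟩ := exists_mem_positiveRoots_lt hn hr h
  exact (hp.2 hq).trans_lt hqr

lemma lt_of_mem_positiveRoots (hn : n ≠ 0) (hq : q ∈ positiveRoots n) (hr : r ≤ 1)
    (h : 2 * r ^ (n - 1) < n * (1 - r) ^ 2) : r < q := by
  by_contra! hqr
  exact (transferPoly_neg_of_le hn hq.1.le hqr hr h).ne hq.2

end Roots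

section Asymptotics

lemma tendsto_log_natCast_atTop : Tendsto (fun n : ℕ => log n) atTop atTop :=
  tendsto_log_atTop.comp tendsto_natCast_atTop_atTop

lemma tendsto_log_div_natCast_atTop : Tendsto (fun n : ℕ => log n / n) atTop (nhds 0) :=
  isLittleO_log_id_atTop.tendsto_div_nhds_zero.comp tendsto_natCast_atTop_atTop

lemma tendsto_one_sub_mul_log_div_natCast_atTop (a : ℝ) :
    Tendsto (fun n : ℕ => 1 - a * (log n / n)) atTop (nhds 1) := by
  simpa using (tendsto_log_div_natCast_atTop.const_mul a).const_sub 1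

lemma one_sub_log_div_pow_le_inv {n : ℕ} (hn : n ≠ 0) : (1 - log n / n) ^ n ≤ (n : ℝ)⁻¹ := by
  have hn_pos : (0 : ℝ) < n := by positivity
  calc (1 - log n / n) ^ n ≤ exp (-log n) :=
        one_sub_div_pow_le_exp_neg (log_le_self hn_pos.le)
    _ = (n : ℝ)⁻¹ := by rw [exp_neg, exp_log hn_pos]

lemma eventually_rpow_neg_le_one_sub_mul_log_div_pow {a d : ℝ} (had : a < d) :
    ∀ᶠ n : ℕ in atTop, (n : ℝ) ^ (-d) ≤ (1 - a * (log n / n)) ^ n := by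
  have hbase := tendsto_one_sub_mul_log_div_natCast_atTop a
  have hquot : Tendsto (fun n : ℕ => a / (1 - a * (log n / n))) atTop (nhds a) := by
    simpa [div_eq_mul_inv] using (hbase.inv₀ one_ne_zero).const_mul a
  filter_upwards [hbase.eventually_const_lt one_pos, hquot.eventually_le_const had,
    eventually_ne_atTop 0] with n hr had hn
  have hn_pos : (0 : ℝ) < n := by positivity
  set r := 1 - a * (log n / n) with hr_def
  have hexponent : n * (1 - r⁻¹) = -(a / r * log n) := by
    have hnr : n * (r - 1) = -(a * log n) := by rw [hr_def]; field_simp; ring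
    field_simp
    exact hnr
  rw [← log_le_log_iff (by positivity) (by positivity), log_rpow hn_pos, log_pow]
  calc -d * log n ≤ -(a / r * log n) := by
        rw [neg_mul]
        gcongr
    _ = n * (1 - r⁻¹) := hexponent.symm
    _ ≤ n * log r := by
        gcongr
        exact one_sub_inv_le_log_of_pos hr

lemma eventually_natCast_mul_mul_log_div_sq_lt_rpow_neg (a : ℝ) {d : ℝ} (hd : d < 1) :
    ∀ᶠ n : ℕ in atTop, n * (a * (log n / n)) ^ 2 < (n : ℝ) ^ (-d) := by
  have hlittle : (fun n : ℕ => a ^ 2 * log n ^ (2 : ℝ)) =o[atTop] fun n : ℕ => (n : ℝ) ^ (1 - d) :=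
    ((isLittleO_log_rpow_rpow_atTop 2 (sub_pos.2 hd)).const_mul_left (a ^ 2)).comp_tendsto
      tendsto_natCast_atTop_atTop
  filter_upwards [hlittle.def one_half_pos, eventually_ne_atTop 0] with n h hn
  have hn_pos : (0 : ℝ) < n := by positivity
  have hpow_pos : 0 < (n : ℝ) ^ (1 - d) := by positivity
  rw [rpow_two, norm_of_nonneg (by positivity), norm_of_nonneg hpow_pos.le] at h
  calc n * (a * (log n / n)) ^ 2 = a ^ 2 * log n ^ 2 / n := by field_simp
    _ < (n : ℝ) ^ (1 - d) / n := by gcongr; linarith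
    _ = (n : ℝ) ^ (-d) := by rw [← rpow_sub_one hn_pos.ne']; congr 1; ring

lemma eventually_transferPoly_one_sub_mul_log_div_pos {a : ℝ} (ha : a < 1) :
    ∀ᶠ n : ℕ in atTop, 0 < transferPoly n (1 - a * (log n / n)) := by
  obtain ⟨d, had, hd⟩ := exists_between ha
  filter_upwards [eventually_ne_atTop 0, eventually_rpow_neg_le_one_sub_mul_log_div_pow had,
    eventually_natCast_mul_mul_log_div_sq_lt_rpow_neg a hd,
    (tendsto_one_sub_mul_log_div_natCast_atTop a).eventually_const_le
      (show (2 / 3 : ℝ) < 1 by norm_num)] with n hn hpow hsq hr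
  refine transferPoly_pos_of_lt_pow hn hr ?_
  rw [sub_sub_cancel]
  exact hsq.trans_le hpow

lemma eventually_two_mul_one_sub_log_div_pow_lt :
    ∀ᶠ n : ℕ in atTop, 2 * (1 - log n / n) ^ (n - 1) < n * (log n / n) ^ 2 := by
  filter_upwards [eventually_ne_atTop 0, tendsto_log_natCast_atTop.eventually_gt_atTop 2,
    tendsto_log_div_natCast_atTop.eventually_le_const one_half_pos] with n hn hlog hdiv
  have hbase : 1 / 2 ≤ 1 - log n / n := by linarith
  calc 2 * (1 - log n / n) ^ (n - 1)
      = 4 * ((1 - log n / n) ^ (n - 1) * (1 / 2)) := by ring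
    _ ≤ 4 * ((1 - log n / n) ^ (n - 1) * (1 - log n / n)) := by gcongr
    _ = 4 * (1 - log n / n) ^ n := by rw [pow_sub_one_mul hn]
    _ ≤ 4 * (n : ℝ)⁻¹ := by gcongr; exact one_sub_log_div_pow_le_inv hn
    _ < log n ^ 2 * (n : ℝ)⁻¹ := by gcongr; nlinarith
    _ = n * (log n / n) ^ 2 := by field_simp

variable {p : ℕ → ℝ}

lemma eventually_one_sub_log_div_lt_of_mem_positiveRoots
    (hp : ∀ᶠ n in atTop, p n ∈ positiveRoots n) :
    ∀ᶠ n : ℕ in atTop, 1 - log n / n < p n := by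
  filter_upwards [hp, eventually_ne_atTop 0, eventually_two_mul_one_sub_log_div_pow_lt]
    with n hpn hn h
  refine lt_of_mem_positiveRoots hn hpn (sub_le_self 1 (by positivity)) ?_
  rwa [sub_sub_cancel]

lemma eventually_lt_one_sub_mul_log_div_of_isLeast_positiveRoots
    (hp : ∀ᶠ n in atTop, IsLeast (positiveRoots n) (p n)) {a : ℝ} (ha : a < 1) :
    ∀ᶠ n : ℕ in atTop, p n < 1 - a * (log n / n) := by
  filter_upwards [hp, eventually_ne_atTop 0, eventually_transferPoly_one_sub_mul_log_div_pos ha,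
    (tendsto_one_sub_mul_log_div_natCast_atTop a).eventually_const_le one_pos] with n hpn hn h hr
  exact isLeast_positiveRoots_lt hn hpn hr h

lemma isLittleO_sub_one_sub_log_div_of_isLeast_positiveRoots
    (hp : ∀ᶠ n in atTop, IsLeast (positiveRoots n) (p n)) :
    (fun n : ℕ => p n - (1 - log n / n)) =o[atTop] (fun n : ℕ => log n / n) := by
  refine isLittleO_iff.2 fun c hc => ?_
  filter_upwards [eventually_one_sub_log_div_lt_of_mem_positiveRoots (hp.mono fun _ h => h.1),
    eventually_lt_one_sub_mul_log_div_of_isLeast_positiveRoots hp (sub_lt_self 1 hc)]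
    with n hlower hupper
  have hdiv : 0 ≤ log n / n := by positivity
  rw [norm_of_nonneg (sub_pos.2 hlower).le, norm_of_nonneg hdiv]
  linarith

end Asymptotics

/-- For each n ≥ 2 the polynomial p^{n+1} + 2p^n − p^{n−1} − n(p−1)² has a smallest
positive root p_1 ∈ (0,1), and p_1 = 1 − (ln n)/n + o((ln n)/n) as n → ∞. -/
theorem smallest_root_asymptotics :
    ∃ p : ℕ → ℝ,
      (∀ n : ℕ, 2 ≤ n →
        p n ∈ Set.Ioo (0 : ℝ) 1 ∧
        (p n) ^ (n + 1) + 2 * (p n) ^ n - (p n) ^ (n - 1) - n * (p n - 1) ^ 2 = 0 ∧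
        (∀ q : ℝ, 0 < q →
          q ^ (n + 1) + 2 * q ^ n - q ^ (n - 1) - n * (q - 1) ^ 2 = 0 → p n ≤ q)) ∧
      (fun n : ℕ => p n - (1 - Real.log n / n)) =o[atTop] (fun n : ℕ => Real.log n / n) := by
  choose! p hp using fun (n : ℕ) (hn : n ≠ 0) => exists_isLeast_positiveRoots hn
  refine ⟨p, fun n hn => ?_, isLittleO_sub_one_sub_log_div_of_isLeast_positiveRoots
    ((eventually_ne_atTop 0).mono hp)⟩
  have hn : n ≠ 0 := by lia
  have hlt : p n < 1 := isLeast_positiveRoots_lt hn (hp n hn) zero_le_one (transferPoly_one_pos n)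
  obtain ⟨⟨hpos, hroot⟩, hmin⟩ := hp n hn
  exact ⟨⟨hpos, hlt⟩, hroot, fun q hq hq_root => hmin ⟨hq, hq_root⟩⟩
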